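/- For an n×n upper triangular complex matrix X with diagonal entries x_{11}, …, x_{nn}, we have det(I_n + X*X) ≥ ∏_{i=1}^n (1 + |x_{ii}|²), with equality if and only if X is diagonal. -/

import Mathlib

open Matrix
open scoped ComplexOrder

/-!
`X*X` is the sum of the rank-one matrices `xᵢ*xᵢ`, where `xᵢ` is the `i`-th row of `X`. Add these
to the identity one at a time, from the last row to the first. When row `a` is added, the rows
already present vanish at `a`, so the matrix `A` built so far is positive definite and fixes the
basis vector `eₐ`. By the matrix determinant lemma the determinant is then multiplied by
`1 + xₐ A⁻¹ xₐ* = 1 + |xₐₐ|² + w A⁻¹ w*`, where `w` is the off-diagonal part of row `a`, and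
`w A⁻¹ w* ≥ 0` with equality only for `w = 0`.
-/

section CommRing

variable {m R : Type*} [Fintype m] [DecidableEq m] [CommRing R] {A : Matrix m m R}

theorem det_add_vecMulVec (hA : IsUnit A.det) (u v : m → R) :
    (A + vecMulVec u v).det = A.det * (1 + v ⬝ᵥ A⁻¹ *ᵥ u) := by
  rw [vecMulVec_eq Unit, det_add_replicateCol_mul_replicateRow hA, Matrix.mul_assoc,
    ← replicateCol_mulVec, det_unique (n := Unit), Matrix.add_apply,
    one_apply_eq, replicateRow_mul_replicateCol_apply]

theorem nonsing_inv_mulVec_eq_self (hA : IsUnit A.det) {v : m → R} (hv : A *ᵥ v = v) :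
    A⁻¹ *ᵥ v = v := by
  rw [← hv, mulVec_mulVec, nonsing_inv_mul A hA, one_mulVec, hv]

theorem dotProduct_nonsing_inv_mulVec_star_of_mulVec_single_eq [StarRing R] (hA : A.IsHermitian)
    (hdet : IsUnit A.det) {a : m} (ha : A *ᵥ Pi.single a 1 = Pi.single a 1) (v : m → R) :
    v ⬝ᵥ A⁻¹ *ᵥ star v = v a * star (v a) +
      Function.update v a 0 ⬝ᵥ A⁻¹ *ᵥ star (Function.update v a 0) := by
  set w := Function.update v a 0
  have hw : w a = 0 := Function.update_self a 0 v
  have hv : v = v a • Pi.single a 1 + w := by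
    ext j
    obtain rfl | hj := eq_or_ne j a <;> simp [w, *]
  have hright : A⁻¹ *ᵥ Pi.single a 1 = Pi.single a 1 := nonsing_inv_mulVec_eq_self hdet ha
  have hleft : Pi.single a 1 ᵥ* A⁻¹ = Pi.single a 1 := by
    have h := congrArg star hright
    rwa [star_mulVec, hA.inv.eq, Pi.star_single, star_one] at h
  have hcross : Pi.single a 1 ⬝ᵥ A⁻¹ *ᵥ star w = 0 := by
    rw [dotProduct_mulVec, hleft, single_one_dotProduct, Pi.star_apply, hw, star_zero]
  have hstar : star v = star (v a) • Pi.single a 1 + star w := by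
    simpa using congrArg star hv
  calc v ⬝ᵥ A⁻¹ *ᵥ star v
      = v a * star (v a) + v ⬝ᵥ A⁻¹ *ᵥ star w := by
        rw [hstar, mulVec_add, mulVec_smul, hright, dotProduct_add, dotProduct_smul,
          dotProduct_single_one, smul_eq_mul, mul_comm]
    _ = v a * star (v a) + w ⬝ᵥ A⁻¹ *ᵥ star w := by
        nth_rw 3 [hv]
        rw [add_dotProduct, smul_dotProduct, hcross, smul_zero, zero_add]

end CommRing

section RCLike

variable {m 𝕜 : Type*} [Fintype m] [DecidableEq m] [RCLike 𝕜] {A : Matrix m m 𝕜} {a : m}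

theorem det_add_vecMulVec_star_self_of_mulVec_single_eq (hA : A.PosDef)
    (ha : A *ᵥ Pi.single a 1 = Pi.single a 1) (v : m → 𝕜) :
    (A + vecMulVec (star v) v).det = A.det * (1 + (‖v a‖ : 𝕜) ^ 2 +
      Function.update v a 0 ⬝ᵥ A⁻¹ *ᵥ star (Function.update v a 0)) := by
  have hdet : IsUnit A.det := hA.det_pos.ne'.isUnit
  rw [det_add_vecMulVec hdet,
    dotProduct_nonsing_inv_mulVec_star_of_mulVec_single_eq hA.isHermitian hdet ha,
    RCLike.star_def, RCLike.mul_conj, add_assoc]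

theorem det_mul_le_det_add_vecMulVec_star_self_of_mulVec_single_eq (hA : A.PosDef)
    (ha : A *ᵥ Pi.single a 1 = Pi.single a 1) (v : m → 𝕜) :
    A.det * (1 + (‖v a‖ : 𝕜) ^ 2) ≤ (A + vecMulVec (star v) v).det := by
  rw [det_add_vecMulVec_star_self_of_mulVec_single_eq hA ha]
  refine mul_le_mul_of_nonneg_left (le_add_of_nonneg_right ?_) hA.det_pos.le
  simpa using hA.inv.posSemidef.dotProduct_mulVec_nonneg (star (Function.update v a 0))

theorem det_add_vecMulVec_star_self_eq_mul_iff_of_mulVec_single_eq (hA : A.PosDef)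
    (ha : A *ᵥ Pi.single a 1 = Pi.single a 1) (v : m → 𝕜) :
    (A + vecMulVec (star v) v).det = A.det * (1 + (‖v a‖ : 𝕜) ^ 2) ↔ ∀ j ≠ a, v j = 0 := by
  have hform (w : m → 𝕜) : w ⬝ᵥ A⁻¹ *ᵥ star w = 0 ↔ w = 0 := by
    refine ⟨fun h => ?_, fun h => by simp [h]⟩
    by_contra hw
    have hpos := hA.inv.dotProduct_mulVec_pos (star_ne_zero.2 hw)
    rw [star_star, h] at hpos
    exact hpos.false
  rw [det_add_vecMulVec_star_self_of_mulVec_single_eq hA ha, mul_right_inj' hA.det_pos.ne',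
    add_eq_left, hform, Function.update_eq_iff]
  simp

end RCLike

section RowGram

variable {m n R : Type*} [Semiring R] [Star R]

/-- The contribution of the rows in `s` to the Gram matrix `Xᴴ * X`, as a sum of rank-one
matrices. It keeps the full size `n × n` for every `s`, so that induction on `s` does not change
the index type. -/
def rowGram (X : Matrix m n R) (s : Finset m) : Matrix n n R :=
  ∑ i ∈ s, vecMulVec (star (X i)) (X i)

theorem rowGram_insert [DecidableEq m] (X : Matrix m n R) {s : Finset m} {a : m} (ha : a ∉ s) :
    rowGram X (insert a s) = rowGram X s + vecMulVec (star (X a)) (X a) := by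
  rw [rowGram, Finset.sum_insert ha, add_comm, rowGram]

theorem rowGram_univ [Fintype m] (X : Matrix m n R) : rowGram X Finset.univ = Xᴴ * X := by
  ext i j
  simp [rowGram, Matrix.sum_apply, vecMulVec_apply, mul_apply]

theorem one_add_rowGram_mulVec_single [Fintype n] [DecidableEq n] {X : Matrix m n R}
    {s : Finset m} {a : n} (ha : ∀ i ∈ s, X i a = 0) :
    (1 + rowGram X s) *ᵥ Pi.single a 1 = Pi.single a 1 := by
  have hsum : rowGram X s *ᵥ Pi.single a 1 = 0 := by
    rw [rowGram, sum_mulVec]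
    refine Finset.sum_eq_zero fun i hi => ?_
    rw [vecMulVec_mulVec, dotProduct_single_one, ha i hi, MulOpposite.op_zero, zero_smul]
  rw [add_mulVec, one_mulVec, hsum, add_zero]

end RowGram

theorem posDef_one_add_rowGram {m n R : Type*} [Finite n] [DecidableEq n] [Ring R] [PartialOrder R]
    [StarRing R] [StarOrderedRing R] [NoZeroDivisors R] (X : Matrix m n R) (s : Finset m) :
    (1 + rowGram X s).PosDef :=
  PosDef.one.add_posSemidef (posSemidef_sum s fun i _ => posSemidef_vecMulVec_star_self (X i))

section IsUpperTriangular

variable {m 𝕜 : Type*} [Fintype m] [LinearOrder m] [RCLike 𝕜] {X : Matrix m m 𝕜}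

theorem prod_le_det_one_add_rowGram (hX : X.IsUpperTriangular) (s : Finset m) :
    ∏ i ∈ s, (1 + (‖X i i‖ : 𝕜) ^ 2) ≤ (1 + rowGram X s).det := by
  induction s using Finset.induction_on_min with
  | empty => simp [rowGram]
  | insert a s has ih =>
    have hmem : a ∉ s := fun h => (has a h).false
    have hA := posDef_one_add_rowGram X s
    have hfix := one_add_rowGram_mulVec_single fun i hi => hX (has i hi)
    rw [Finset.prod_insert hmem, mul_comm, rowGram_insert X hmem, ← add_assoc]
    calc (∏ i ∈ s, (1 + (‖X i i‖ : 𝕜) ^ 2)) * (1 + (‖X a a‖ : 𝕜) ^ 2)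
        ≤ (1 + rowGram X s).det * (1 + (‖X a a‖ : 𝕜) ^ 2) := by gcongr
      _ ≤ (1 + rowGram X s + vecMulVec (star (X a)) (X a)).det :=
        det_mul_le_det_add_vecMulVec_star_self_of_mulVec_single_eq hA hfix _

theorem det_one_add_rowGram_eq_prod_iff (hX : X.IsUpperTriangular) (s : Finset m) :
    (1 + rowGram X s).det = ∏ i ∈ s, (1 + (‖X i i‖ : 𝕜) ^ 2) ↔
      ∀ i ∈ s, ∀ j ≠ i, X i j = 0 := by
  induction s using Finset.induction_on_min with
  | empty => simp [rowGram]
  | insert a s has ih =>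
    have hmem : a ∉ s := fun h => (has a h).false
    have hpos : (0 : 𝕜) < 1 + (‖X a a‖ : 𝕜) ^ 2 := by positivity
    have hA := posDef_one_add_rowGram X s
    have hfix := one_add_rowGram_mulVec_single fun i hi => hX (has i hi)
    have hprod := mul_le_mul_of_nonneg_right (prod_le_det_one_add_rowGram hX s) hpos.le
    have hdet := det_mul_le_det_add_vecMulVec_star_self_of_mulVec_single_eq hA hfix (X a)
    rw [Finset.prod_insert hmem, mul_comm, rowGram_insert X hmem, ← add_assoc,
      Finset.forall_mem_insert, ← ih,
      ← det_add_vecMulVec_star_self_eq_mul_iff_of_mulVec_single_eq hA hfix]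
    constructor
    · intro h
      have hrow := (h.trans_le hprod).antisymm hdet
      exact ⟨hrow, mul_right_cancel₀ hpos.ne' (hrow.symm.trans h)⟩
    · rintro ⟨hrow, hs⟩
      rw [hrow, hs]

theorem det_one_add_conjTranspose_mul_self_ge_prod_general (hX : X.IsUpperTriangular) :
    ∏ i, (1 + ‖X i i‖ ^ 2) ≤ RCLike.re (1 + Xᴴ * X).det ∧
      (RCLike.re (1 + Xᴴ * X).det = ∏ i, (1 + ‖X i i‖ ^ 2) ↔ X.IsDiag) := by
  have hreal : ((RCLike.re (1 + Xᴴ * X).det : ℝ) : 𝕜) = (1 + Xᴴ * X).det := by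
    rw [← rowGram_univ]
    exact RCLike.conj_eq_iff_re.1 (RCLike.conj_eq_iff_im.2
      (RCLike.pos_iff.1 (posDef_one_add_rowGram X Finset.univ).det_pos).2)
  have hle := prod_le_det_one_add_rowGram hX Finset.univ
  have heq_iff := det_one_add_rowGram_eq_prod_iff hX Finset.univ
  rw [rowGram_univ, ← hreal] at hle heq_iff
  norm_cast at hle heq_iff
  exact ⟨hle, heq_iff.trans ⟨fun h i j hij => h i (Finset.mem_univ i) j hij.symm,
    fun h i _ _ hj => h (Ne.symm hj)⟩⟩

end IsUpperTriangular

/-- **Drury's lemma.** For an upper triangular complex matrix `X`,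
`det(I + X*X) ≥ ∏ᵢ (1 + |xᵢᵢ|²)`, with equality if and only if `X` is diagonal. -/
theorem det_one_add_conjTranspose_mul_self_ge_prod (n : ℕ) (X : Matrix (Fin n) (Fin n) ℂ)
    (hX : ∀ i j : Fin n, j < i → X i j = 0) :
    (∏ i : Fin n, (1 + ‖X i i‖ ^ 2)) ≤ (1 + Xᴴ * X).det.re ∧
    ((1 + Xᴴ * X).det.re = ∏ i : Fin n, (1 + ‖X i i‖ ^ 2) ↔
      X = Matrix.diagonal fun i => X i i) := by
  obtain ⟨hle, heq_iff⟩ := det_one_add_conjTranspose_mul_self_ge_prod_general hX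
  exact ⟨hle, heq_iff.trans ((isDiag_iff_diagonal_diag X).trans eq_comm)⟩
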